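/- Let X and Y be finite nonempty sets, P a probability distribution on X, {ρ_x}_{x∈X} a family of density matrices on ℂ^d, and {Q_y}_{y∈Y} a POVM with outcome set Y on ℂ^d. Then there exists a probability distribution σ on Y such that for all x ∈ X and y ∈ Y: P(x)·Tr(Q_y ρ_x) ≤ d · P(x) · σ(y). (In other words, the max-information between the input and the measurement outcome of the joint distribution (x,y) ↦ P(x)·Tr(Q_y ρ_x) is at most log₂ d.) -/

import Mathlib

open Matrix BigOperators ComplexOrder

/-!
Take `σ` to be the outcome distribution of the measurement on the maximally mixed state,
`σ(y) = Tr Q_y / d`. It then suffices that `Tr (A B) ≤ Tr A · Tr B` for positive semidefinite `A`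
and `B`: writing `A = SᴴS` and `B = TᴴT`, this says `‖S Tᴴ‖² ≤ ‖S‖² ‖Tᴴ‖²`, the
submultiplicativity of the Frobenius norm.
-/

section TraceInequality

variable {𝕜 m n : Type*} [RCLike 𝕜] [Fintype m] [Fintype n]

open scoped Matrix.Norms.Frobenius in
lemma trace_mul_conjTranspose_self_eq_frobenius_norm_sq (A : Matrix m n 𝕜) :
    (A * Aᴴ).trace = (‖A‖ : 𝕜) ^ 2 := by
  have norm_sq : ‖A‖ ^ 2 = ∑ i, ∑ j, ‖A i j‖ ^ 2 := by
    rw [frobenius_norm_def, ← Real.sqrt_eq_rpow, Real.sq_sqrt (by positivity)]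
    simp only [Real.rpow_two]
  rw [← RCLike.ofReal_pow, norm_sq]
  simp [trace, mul_apply, RCLike.mul_conj]

open scoped MatrixOrder Matrix.Norms.L2Operator in
lemma exists_eq_conjTranspose_mul_self {A : Matrix n n 𝕜} (hA : A.PosSemidef) :
    ∃ S : Matrix n n 𝕜, A = Sᴴ * S := by
  classical exact CStarAlgebra.nonneg_iff_eq_star_mul_self.mp hA.nonneg

open scoped Matrix.Norms.Frobenius in
lemma trace_mul_le_trace_mul_trace {A B : Matrix n n 𝕜} (hA : A.PosSemidef)
    (hB : B.PosSemidef) : (A * B).trace ≤ A.trace * B.trace := by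
  obtain ⟨S, rfl⟩ := exists_eq_conjTranspose_mul_self hA
  obtain ⟨T, rfl⟩ := exists_eq_conjTranspose_mul_self hB
  calc (Sᴴ * S * (Tᴴ * T)).trace
      = (S * Tᴴ * (S * Tᴴ)ᴴ).trace := by
        rw [conjTranspose_mul, conjTranspose_conjTranspose, Matrix.mul_assoc, trace_mul_comm]
        simp only [Matrix.mul_assoc]
    _ = ((‖S * Tᴴ‖ ^ 2 : ℝ) : 𝕜) := by
        rw [trace_mul_conjTranspose_self_eq_frobenius_norm_sq, RCLike.ofReal_pow]
    _ ≤ (((‖S‖ * ‖Tᴴ‖) ^ 2 : ℝ) : 𝕜) :=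
        RCLike.ofReal_le_ofReal.mpr <| by gcongr; exact frobenius_norm_mul S Tᴴ
    _ = (S * Sᴴ).trace * (Tᴴ * Tᴴᴴ).trace := by
        simp only [trace_mul_conjTranspose_self_eq_frobenius_norm_sq, mul_pow, RCLike.ofReal_mul,
          RCLike.ofReal_pow]
    _ = (Sᴴ * S).trace * (Tᴴ * T).trace := by
        rw [trace_mul_comm S, conjTranspose_conjTranspose]

end TraceInequality

lemma nonempty_of_trace_ne_zero {n R : Type*} [Fintype n] [AddCommMonoid R] {A : Matrix n n R}
    (hA : A.trace ≠ 0) : Nonempty n := by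
  by_contra! h
  exact hA (Finset.sum_of_isEmpty _)

section NormalizedTrace

variable {𝕜 n : Type*} [RCLike 𝕜] [Fintype n]

/-- The normalized trace `Re (Tr A) / |n|`. For a POVM element `A`, this is the probability of its
outcome in the maximally mixed state; taking real parts makes it a real number for every `A`. -/
noncomputable def normalizedTrace (A : Matrix n n 𝕜) : ℝ :=
  RCLike.re A.trace / Fintype.card n

lemma normalizedTrace_nonneg {A : Matrix n n 𝕜} (hA : A.PosSemidef) : 0 ≤ normalizedTrace A :=
  div_nonneg (RCLike.nonneg_iff.mp hA.trace_nonneg).1 (Nat.cast_nonneg _)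

lemma normalizedTrace_one [DecidableEq n] [Nonempty n] :
    normalizedTrace (1 : Matrix n n 𝕜) = 1 := by
  simp [normalizedTrace]

lemma hasSum_normalizedTrace {Y : Type*} {Q : Y → Matrix n n 𝕜} {A : Matrix n n 𝕜}
    (hQ : HasSum Q A) : HasSum (fun y ↦ normalizedTrace (Q y)) (normalizedTrace A) := by
  have re_trace : HasSum (fun y ↦ RCLike.re (Q y).trace) (RCLike.re A.trace) :=
    hQ.map (RCLike.re.comp (traceAddMonoidHom n 𝕜))
      (RCLike.continuous_re.comp continuous_id.matrix_trace)
  exact re_trace.div_const _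

lemma re_trace_mul_le_card_mul_normalizedTrace {A ρ : Matrix n n 𝕜} (hA : A.PosSemidef)
    (hρ : ρ.PosSemidef) (hρ1 : ρ.trace = 1) :
    RCLike.re (A * ρ).trace ≤ Fintype.card n * normalizedTrace A := by
  have : Nonempty n := nonempty_of_trace_ne_zero (hρ1 ▸ one_ne_zero)
  have trace_le : (A * ρ).trace ≤ A.trace := by
    simpa [hρ1] using trace_mul_le_trace_mul_trace hA hρ
  rw [normalizedTrace, mul_div_cancel₀ _ (Nat.cast_ne_zero.mpr Fintype.card_ne_zero)]
  exact (RCLike.le_iff_re_im.mp trace_le).1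

end NormalizedTrace

theorem measurement_max_information_general {𝕜 n X Y : Type*} [RCLike 𝕜] [Fintype n]
    [DecidableEq n] [Nonempty X] (P : X → ℝ) (hP0 : ∀ x, 0 ≤ P x)
    (ρ : X → Matrix n n 𝕜) (hρ : ∀ x, (ρ x).PosSemidef ∧ (ρ x).trace = 1)
    (Q : Y → Matrix n n 𝕜) (hQ : (∀ y, (Q y).PosSemidef) ∧ HasSum Q 1) :
    ∃ σ : Y → ℝ, (∀ y, 0 ≤ σ y) ∧ HasSum σ 1 ∧
      ∀ x y, P x * RCLike.re (Q y * ρ x).trace ≤ Fintype.card n * (P x * σ y) := by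
  obtain ⟨x₀⟩ := ‹Nonempty X›
  have : Nonempty n := nonempty_of_trace_ne_zero ((hρ x₀).2 ▸ one_ne_zero)
  refine ⟨fun y ↦ normalizedTrace (Q y), fun y ↦ normalizedTrace_nonneg (hQ.1 y), ?_,
    fun x y ↦ ?_⟩
  · exact normalizedTrace_one (𝕜 := 𝕜) (n := n) ▸ hasSum_normalizedTrace hQ.2
  · calc P x * RCLike.re (Q y * ρ x).trace
        ≤ P x * (Fintype.card n * normalizedTrace (Q y)) :=
          mul_le_mul_of_nonneg_left
            (re_trace_mul_le_card_mul_normalizedTrace (hQ.1 y) (hρ x).1 (hρ x).2) (hP0 x)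
      _ = Fintype.card n * (P x * normalizedTrace (Q y)) := mul_left_comm _ _ _

/-- STATEMENT 10: For a distribution `P` on `X`, density matrices `{ρ_x}` on `ℂ^d` and a POVM
`{Q_y}` with outcome set `Y`, there is a distribution `σ` on `Y` such that
`P(x)·Tr(Q_y ρ_x) ≤ d · P(x) · σ(y)` for all `x, y`; i.e. the max-information between input
and measurement outcome is at most `log₂ d`. -/
theorem measurement_max_information {d : ℕ} {X Y : Type*} [Fintype X] [Nonempty X]
    [Fintype Y] [Nonempty Y]
    (P : X → ℝ) (hP0 : ∀ x, 0 ≤ P x) (hP1 : ∑ x, P x = 1)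
    (ρ : X → Matrix (Fin d) (Fin d) ℂ)
    (hρ : ∀ x, (ρ x).PosSemidef ∧ (ρ x).trace = 1)
    (Q : Y → Matrix (Fin d) (Fin d) ℂ)
    (hQ : (∀ y, (Q y).PosSemidef) ∧ ∑ y, Q y = 1) :
    ∃ σ : Y → ℝ, (∀ y, 0 ≤ σ y) ∧ ∑ y, σ y = 1 ∧
      ∀ x y, P x * ((Q y * ρ x).trace).re ≤ (d : ℝ) * (P x * σ y) := by
  obtain ⟨σ, hσ0, hσ1, hσ⟩ :=
    measurement_max_information_general P hP0 ρ hρ Q ⟨hQ.1, hQ.2 ▸ hasSum_fintype Q⟩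
  exact ⟨σ, hσ0, (hasSum_fintype σ).unique hσ1, by simpa using hσ⟩
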